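/- arXiv:math/0004121 — 2 statements merged into one kernel-verified Lean document; each statement's English description precedes it below -/
import Mathlib

section
/- (Theorem 2.1, converse part) In the general hypothesis testing setup, for every r > 0, no real number E with E > inf{ R + η(R) : R ∈ ℝ, η(R) < r } is r-achievable; that is, for such E there exist no measurable acceptance regions A_n ⊆ Ω_n with liminf_{n→∞} −(1/n) log μ_n ≥ r and liminf_{n→∞} −(1/n) log λ_n ≥ E. -/
open MeasureTheory Filter
open scoped ENNReal NNReal

/-- The exponent `-(1/n) log p` of a nonneg extended real `p`, valued in `EReal`,
with the conventions `-log 0 = +∞` and `-log ∞ = -∞`. -/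
noncomputable def expRate (n : ℕ) (p : ℝ≥0∞) : EReal :=
  (((n : ℝ)⁻¹ : ℝ) : EReal) * (-(ENNReal.log p))

/-- The likelihood ratio `dμ/dν`, defined to be `+∞` on the part of the space where
`μ` is singular with respect to `ν` (μ-a.e.). -/
noncomputable def lratio {Ω : Type*} [MeasurableSpace Ω] (μ ν : Measure Ω) (x : Ω) : ℝ≥0∞ :=
  μ.rnDeriv (μ + ν) x / ν.rnDeriv (μ + ν) x

section Setup

variable {Ω : ℕ → Type*} [∀ n, MeasurableSpace (Ω n)]

/-- `η(R) = liminf_n -(1/n) log P_n{ (1/n) log dP_n/dQ_n ≤ R }`. -/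
noncomputable def eta (P Q : ∀ n, Measure (Ω n)) (R : ℝ) : EReal :=
  Filter.atTop.liminf fun n =>
    expRate n ((P n) {x | lratio (P n) (Q n) x ≤ ENNReal.ofReal (Real.exp (n * R))})

/-- `E` is `r`-achievable: there are measurable acceptance regions `A n` with
`liminf -(1/n) log μ_n ≥ r` and `liminf -(1/n) log λ_n ≥ E`. -/
def rAchievable (P Q : ∀ n, Measure (Ω n)) (r E : ℝ) : Prop :=
  ∃ A : ∀ n, Set (Ω n), (∀ n, MeasurableSet (A n)) ∧
    (r : EReal) ≤ Filter.atTop.liminf (fun n => expRate n ((P n) (A n)ᶜ)) ∧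
    (E : EReal) ≤ Filter.atTop.liminf (fun n => expRate n ((Q n) (A n)))

/-- The optimal error exponent `B_e(r)`: the supremum of all `r`-achievable `E`. -/
noncomputable def Be (P Q : ∀ n, Measure (Ω n)) (r : ℝ) : EReal :=
  sSup {x : EReal | ∃ E : ℝ, rAchievable P Q r E ∧ x = (E : EReal)}

end Setup

/-
Where `dP_n/dQ_n ≤ exp (n R)`, `P_n` is at most `exp (n R) * Q_n`, so every acceptance region `A_n`
satisfies `P_n {Z_n ≤ R} ≤ P_n A_nᶜ + exp (n R) * Q_n A_n`. The exponential growth rate of a sum is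
the larger of the two rates; hence if the regions `A_n` show that `E` is `r`-achievable, then
`η R ≥ min r (E - R)`, and `η R < r` forces `E ≤ R + η R`.
-/

section LikelihoodRatio

variable {X : Type*} [MeasurableSpace X] (μ ν : Measure X) [SigmaFinite μ] [SigmaFinite ν]

lemma measure_le_mul_of_lratio_le {c : ℝ≥0∞} (hc : c ≠ ∞) {s : Set X}
    (hs : ∀ x ∈ s, lratio μ ν x ≤ c) : μ s ≤ c * ν s := by
  have hμ : μ ≪ μ + ν := Measure.AbsolutelyContinuous.rfl.add_right ν
  -- Finiteness of `dν/d(μ + ν)` excludes the junk value `a / ∞ = 0` of the ratio.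
  have density_le : ∀ᵐ x ∂(μ + ν), x ∈ s → μ.rnDeriv (μ + ν) x ≤ c * ν.rnDeriv (μ + ν) x := by
    filter_upwards [ν.rnDeriv_ne_top (μ + ν)] with x hx hxs
    exact (ENNReal.div_le_iff_le_mul (.inr hc) (.inl hx)).1 (hs x hxs)
  have hmeas : Measurable (ν.rnDeriv (μ + ν)) := Measure.measurable_rnDeriv _ _
  calc μ s = ∫⁻ x in s, μ.rnDeriv (μ + ν) x ∂(μ + ν) := (Measure.setLIntegral_rnDeriv hμ s).symm
    _ ≤ ∫⁻ x in s, c * ν.rnDeriv (μ + ν) x ∂(μ + ν) :=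
        setLIntegral_mono_ae (hmeas.const_mul c).aemeasurable density_le
    _ = c * ∫⁻ x in s, ν.rnDeriv (μ + ν) x ∂(μ + ν) := lintegral_const_mul c hmeas
    _ ≤ c * ν s := by gcongr; exact Measure.setLIntegral_rnDeriv_le s

lemma measure_lratio_le_le {c : ℝ≥0∞} (hc : c ≠ ∞) (A : Set X) :
    μ {x | lratio μ ν x ≤ c} ≤ μ Aᶜ + c * ν A := by
  set S := {x | lratio μ ν x ≤ c}
  calc μ S ≤ μ (S ∩ A) + μ (S \ A) := measure_le_inter_add_sdiff μ S A
    _ ≤ c * ν (S ∩ A) + μ (S \ A) := by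
        gcongr
        exact measure_le_mul_of_lratio_le μ ν hc fun _ hx => hx.1
    _ ≤ c * ν A + μ Aᶜ := by
        gcongr
        · exact Set.inter_subset_right
        · exact Set.sdiff_subset_compl S A
    _ = μ Aᶜ + c * ν A := add_comm _ _

end LikelihoodRatio

section Exponents

open ExpGrowth

lemma liminf_expRate (p : ℕ → ℝ≥0∞) :
    atTop.liminf (fun n => expRate n (p n)) = -expGrowthSup p := by
  rw [expGrowthSup, ← EReal.liminf_neg]
  congr 1 with n
  rw [expRate, mul_neg, Pi.neg_apply, EReal.div_eq_inv_mul, EReal.coe_inv, EReal.coe_natCast]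

lemma expGrowthSup_ofReal_exp_natCast_mul (R : ℝ) :
    expGrowthSup (fun n : ℕ => ENNReal.ofReal (Real.exp (n * R))) = R := by
  rw [← expGrowthSup_exp (a := R)]
  congr 1 with n
  rw [← EReal.coe_natCast, ← EReal.coe_mul, EReal.exp_coe, mul_comm]

end Exponents

section Achievability

open ExpGrowth

variable {Ω : ℕ → Type*} [∀ n, MeasurableSpace (Ω n)] (P Q : ∀ n, Measure (Ω n))
  [∀ n, SigmaFinite (P n)] [∀ n, SigmaFinite (Q n)]

lemma expGrowthSup_measure_lratio_le_le (A : ∀ n, Set (Ω n)) (R : ℝ) :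
    expGrowthSup (fun n => P n {x | lratio (P n) (Q n) x ≤ ENNReal.ofReal (Real.exp (n * R))}) ≤
      expGrowthSup (fun n => P n (A n)ᶜ) ⊔ (R + expGrowthSup (fun n => Q n (A n))) := by
  set c : ℕ → ℝ≥0∞ := fun n => ENNReal.ofReal (Real.exp (n * R))
  have growth_c : expGrowthSup c = R := expGrowthSup_ofReal_exp_natCast_mul R
  calc expGrowthSup (fun n => P n {x | lratio (P n) (Q n) x ≤ c n})
      ≤ expGrowthSup ((fun n => P n (A n)ᶜ) + c * fun n => Q n (A n)) :=
        expGrowthSup_monotone fun n => measure_lratio_le_le (P n) (Q n) ENNReal.ofReal_ne_top (A n)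
    _ = expGrowthSup (fun n => P n (A n)ᶜ) ⊔ expGrowthSup (c * fun n => Q n (A n)) :=
        expGrowthSup_add
    _ ≤ expGrowthSup (fun n => P n (A n)ᶜ) ⊔ (expGrowthSup c + expGrowthSup fun n => Q n (A n)) :=
        sup_le_sup_left (expGrowthSup_mul_le (.inl (by simp [growth_c]))
          (.inl (by simp [growth_c]))) _
    _ = expGrowthSup (fun n => P n (A n)ᶜ) ⊔ (R + expGrowthSup fun n => Q n (A n)) := by
        rw [growth_c]

lemma min_liminf_expRate_le_eta (A : ∀ n, Set (Ω n)) (R : ℝ) :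
    min (atTop.liminf fun n => expRate n (P n (A n)ᶜ))
      (atTop.liminf (fun n => expRate n (Q n (A n))) - R) ≤ eta P Q R := by
  simp only [eta, liminf_expRate]
  apply EReal.le_neg_of_le_neg
  rw [EReal.neg_strictAnti.antitone.map_min, neg_neg,
    EReal.neg_sub (.inr (EReal.coe_ne_bot R)) (.inr (EReal.coe_ne_top R)), neg_neg, add_comm]
  exact expGrowthSup_measure_lratio_le_le P Q A R

theorem han_theorem_2_1_converse_general {r E : ℝ} (h : rAchievable P Q r E) :
    (E : EReal) ≤
      sInf {x : EReal | ∃ R : ℝ, eta P Q R < (r : EReal) ∧ x = (R : EReal) + eta P Q R} := by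
  obtain ⟨A, -, hP, hQ⟩ := h
  refine le_sInf ?_
  rintro _ ⟨R, hR, rfl⟩
  have h_eta : min (r : EReal) (E - R) ≤ eta P Q R :=
    (min_le_min hP (EReal.sub_le_sub hQ le_rfl)).trans (min_liminf_expRate_le_eta P Q A R)
  have hE : (E - R : EReal) ≤ eta P Q R := (min_le_iff.1 h_eta).resolve_left hR.not_ge
  rw [add_comm]
  exact (EReal.sub_le_iff_le_add (.inl (EReal.coe_ne_bot R)) (.inl (EReal.coe_ne_top R))).1 hE

end Achievability

/-- Theorem 2.1, converse part: for `r > 0`, no real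
`E > inf { R + η(R) : R ∈ ℝ, η(R) < r }` is `r`-achievable. -/
theorem han_theorem_2_1_converse {Ω : ℕ → Type*} [∀ n, MeasurableSpace (Ω n)]
    (P Q : ∀ n, Measure (Ω n)) [∀ n, IsProbabilityMeasure (P n)]
    [∀ n, IsProbabilityMeasure (Q n)] (r : ℝ) (hr : 0 < r) (E : ℝ)
    (hE : sInf {x : EReal | ∃ R : ℝ, eta P Q R < (r : EReal) ∧ x = (R : EReal) + eta P Q R}
      < (E : EReal)) :
    ¬ rAchievable P Q r E :=
  fun h => (han_theorem_2_1_converse_general P Q h).not_gt hE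
end

section
/- (Abstract-alphabet Hoeffding theorem, eq. (3.39)) Let (X, 𝒜) be a measurable space and let P and P̄ be mutually absolutely continuous probability measures on X with D(P‖P̄) < ∞ and D(P̄‖P) < ∞, where D denotes Kullback–Leibler divergence (natural logarithm). Let the null hypothesis be P_n = P^{⊗n} and the alternative hypothesis be Q_n = P̄^{⊗n} (n-fold product measures on X^n). Then for every r > 0, B_e(r) = inf{ D(Q‖P̄) : Q a probability measure on X with D(Q‖P) < r }. -/
open MeasureTheory Filter
open scoped ENNReal NNReal

open scoped Classical

/-- The Kullback–Leibler divergence `D(Q‖P) = ∫ log (dQ/dP) dQ` (natural logarithm),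
valued in `[0, ∞]`, equal to `+∞` unless `Q ≪ P` and the integrand is integrable. -/
noncomputable def KLdiv {X : Type*} [MeasurableSpace X] (Q P : Measure X) : ℝ≥0∞ :=
  if Q ≪ P ∧ MeasureTheory.Integrable (fun x => Real.log (Q.rnDeriv P x).toReal) Q
  then ENNReal.ofReal (∫ x, Real.log ((Q.rnDeriv P x).toReal) ∂Q) else ⊤

/-!
The exponential arc `Q_s`, the tilting of `P` by `s * log (dPb/dP)` for `0 < s < 1`, joins `P` to
`Pb`. If `Λ` denotes the cumulant generating function of `log (dPb/dP)` under `P`, then `D(Q_s‖P)`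
and `D(Q_s‖Pb)` are minus the values at `0` and at `1` of the tangent to `Λ` at `s`. By Chernoff's
bound, thresholding the normalized log-likelihood ratio at the slope `Λ'(s)` achieves exactly this
pair of exponents. Since `Λ 0 = Λ 1 = 0`, the first divergence takes arbitrarily small values and
so does the second: either some point of the arc lies at divergence exactly `r` from `P` and is a
limit of points at divergence less than `r`, or the whole arc lies at divergence less than `r` and
the infimum is `0`.

Conversely, if `D(Q‖P) < r` and a test achieves the pair `(r, E)` with `D(Q‖Pb) < E`, then changing
measure from `P ^ n` and from `Pb ^ n` to `Q ^ n`, with the weak law of large numbers controlling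
the likelihood ratios, shows that `Q ^ n` asymptotically charges neither the acceptance region nor
its complement.
-/

open ProbabilityTheory

section ErrorExponents

lemma coe_le_expRate_iff {n : ℕ} (hn : 0 < n) (c : ℝ) (p : ℝ≥0∞) :
    (c : EReal) ≤ expRate n p ↔ p ≤ ENNReal.ofReal (Real.exp (-(n * c))) := by
  have hn' : (0 : ℝ) < n := by exact_mod_cast hn
  rw [← ENNReal.log_le_log_iff, ENNReal.log_ofReal_of_pos (Real.exp_pos _), Real.log_exp, expRate]
  induction ENNReal.log p with
  | bot => simp [EReal.coe_mul_top_of_pos (inv_pos.mpr hn')]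
  | top =>
    rw [EReal.neg_top, EReal.coe_mul_bot_of_pos (inv_pos.mpr hn')]
    simp only [le_bot_iff, top_le_iff, EReal.coe_ne_bot, EReal.coe_ne_top]
  | coe y =>
    rw [← EReal.coe_neg, ← EReal.coe_mul, EReal.coe_le_coe_iff, EReal.coe_le_coe_iff,
      inv_mul_eq_div, le_div_iff₀ hn']
    constructor <;> intro h <;> linarith

lemma coe_le_liminf_expRate {p : ℕ → ℝ≥0∞} {c : ℝ}
    (hp : ∀ n, p n ≤ ENNReal.ofReal (Real.exp (-(n * c)))) :
    (c : EReal) ≤ atTop.liminf fun n => expRate n (p n) := by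
  refine le_liminf_of_le (by isBoundedDefault) ?_
  filter_upwards [eventually_gt_atTop 0] with n hn
  exact (coe_le_expRate_iff hn c (p n)).mpr (hp n)

lemma eventually_le_exp_of_lt_liminf_expRate {p : ℕ → ℝ≥0∞} {c : ℝ}
    (hc : (c : EReal) < atTop.liminf fun n => expRate n (p n)) :
    ∀ᶠ n : ℕ in atTop, p n ≤ ENNReal.ofReal (Real.exp (-(n * c))) := by
  filter_upwards [eventually_lt_of_lt_liminf hc, eventually_gt_atTop 0] with n hlt hn
  exact (coe_le_expRate_iff hn c (p n)).mp hlt.le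

variable {Ω : ℕ → Type*} [∀ n, MeasurableSpace (Ω n)] {P Q : ∀ n, Measure (Ω n)} {r E : ℝ}

lemma rAchievable_of_le_exp {A : ∀ n, Set (Ω n)} (hA : ∀ n, MeasurableSet (A n))
    (hP : ∀ n, P n (A n)ᶜ ≤ ENNReal.ofReal (Real.exp (-(n * r))))
    (hQ : ∀ n, Q n (A n) ≤ ENNReal.ofReal (Real.exp (-(n * E)))) :
    rAchievable P Q r E :=
  ⟨A, hA, coe_le_liminf_expRate hP, coe_le_liminf_expRate hQ⟩

lemma rAchievable.coe_le_Be (h : rAchievable P Q r E) : (E : EReal) ≤ Be P Q r :=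
  le_sSup ⟨E, h, rfl⟩

lemma Be_nonneg [∀ n, IsProbabilityMeasure (Q n)] : 0 ≤ Be P Q r :=
  (rAchievable_of_le_exp (E := 0) (fun _ => MeasurableSet.univ) (by simp) (by simp)).coe_le_Be

end ErrorExponents

section KLdiv

variable {X : Type*} [MeasurableSpace X] {Q P : Measure X}

lemma KLdiv_ne_top_iff : KLdiv Q P ≠ ⊤ ↔ Q ≪ P ∧ Integrable (llr Q P) Q := by
  unfold KLdiv
  split_ifs with h
  · exact iff_of_true ENNReal.ofReal_ne_top h
  · exact iff_of_false (not_not_intro rfl) h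

variable [IsProbabilityMeasure Q] [IsProbabilityMeasure P]

lemma coe_KLdiv_of_integrable (hQP : Q ≪ P) (hint : Integrable (llr Q P) Q) :
    (KLdiv Q P : EReal) = (∫ x, llr Q P x ∂Q : ℝ) := by
  have gibbs : 0 ≤ ∫ x, llr Q P x ∂Q := by
    simpa using InformationTheory.integral_llr_add_sub_measure_univ_nonneg hQP hint
  rw [KLdiv, if_pos ⟨hQP, hint⟩]
  change ((ENNReal.ofReal (∫ x, llr Q P x ∂Q) : ℝ≥0∞) : EReal) = _
  rw [EReal.coe_ennreal_ofReal, max_eq_left gibbs]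

lemma coe_KLdiv_of_llr_ae_eq (hQP : Q ≪ P) {L : X → ℝ} (hL : Integrable L Q) {a b : ℝ}
    (h : llr Q P =ᵐ[Q] fun x => a * L x + b) :
    (KLdiv Q P : EReal) = (a * ∫ x, L x ∂Q + b : ℝ) := by
  have hint : Integrable (fun x => a * L x + b) Q := (hL.const_mul a).add (integrable_const b)
  rw [coe_KLdiv_of_integrable hQP (hint.congr h.symm), integral_congr_ae h,
    integral_add (hL.const_mul a) (integrable_const b), integral_const_mul]
  simp

end KLdiv

section ProductMeasures

variable {ι : Type*} [Fintype ι]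

lemma lintegral_pi_prod {X : ι → Type*} [∀ i, MeasurableSpace (X i)] (μ : ∀ i, Measure (X i))
    [∀ i, IsProbabilityMeasure (μ i)] {g : ∀ i, X i → ℝ≥0∞} (hg : ∀ i, Measurable (g i)) :
    ∫⁻ x, ∏ i, g i (x i) ∂Measure.pi μ = ∏ i, ∫⁻ y, g i y ∂μ i := by
  have indep : iIndepFun (fun i (x : ∀ i, X i) => g i (x i)) (Measure.pi μ) :=
    iIndepFun_pi fun i => (hg i).aemeasurable
  rw [lintegral_prod_eq_prod_lintegral_of_indepFun Finset.univ _ indep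
    fun i => (hg i).comp (measurable_pi_apply i)]
  exact Finset.prod_congr rfl fun i _ => (measurePreserving_eval μ i).lintegral_comp (hg i)

lemma pi_withDensity {X : ι → Type*} [∀ i, MeasurableSpace (X i)] (μ : ∀ i, Measure (X i))
    [∀ i, IsProbabilityMeasure (μ i)] {g : ∀ i, X i → ℝ≥0∞} (hg : ∀ i, Measurable (g i))
    [∀ i, SigmaFinite ((μ i).withDensity (g i))] :
    Measure.pi (fun i => (μ i).withDensity (g i))
      = (Measure.pi μ).withDensity fun x => ∏ i, g i (x i) := by
  classical
  refine Measure.pi_eq fun s hs => ?_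
  have indicator_prod (x : ∀ i, X i) : (Set.univ.pi s).indicator (fun x => ∏ i, g i (x i)) x
      = ∏ i, (s i).indicator (g i) (x i) := by
    simp [Set.indicator_apply, Finset.prod_ite_zero]
  rw [withDensity_apply _ (.univ_pi hs), ← lintegral_indicator (.univ_pi hs)]
  simp_rw [indicator_prod]
  rw [lintegral_pi_prod μ fun i => (hg i).indicator (hs i)]
  refine Finset.prod_congr rfl fun i _ => ?_
  rw [lintegral_indicator (hs i), withDensity_apply _ (hs i)]

variable {X : Type*} [MeasurableSpace X] {μ : Measure X} [IsFiniteMeasure μ] {L : X → ℝ} {t : ℝ}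

lemma integrable_exp_mul_sum_pi (hint : Integrable (fun x => Real.exp (t * L x)) μ) :
    Integrable (fun x => Real.exp (t * ∑ i, L (x i))) (Measure.pi fun _ : ι => μ) := by
  simp_rw [Finset.mul_sum, Real.exp_sum]
  exact Integrable.fintype_prod fun _ => hint

lemma cgf_sum_pi : cgf (fun x => ∑ i, L (x i)) (Measure.pi fun _ : ι => μ) t
    = Fintype.card ι * cgf L μ t := by
  simp_rw [cgf, mgf, Finset.mul_sum, Real.exp_sum]
  rw [integral_fintype_prod_eq_pow fun x => Real.exp (t * L x), Real.log_pow]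

lemma pi_le_sum_le_exp (ht : 0 ≤ t) (hint : Integrable (fun x => Real.exp (t * L x)) μ) (c : ℝ) :
    Measure.pi (fun _ : ι => μ) {x | Fintype.card ι * c ≤ ∑ i, L (x i)}
      ≤ ENNReal.ofReal (Real.exp (-(Fintype.card ι * (t * c - cgf L μ t)))) := by
  rw [← ofReal_measureReal]
  refine ENNReal.ofReal_le_ofReal
    ((measure_ge_le_exp_cgf _ ht (integrable_exp_mul_sum_pi hint)).trans_eq ?_)
  rw [cgf_sum_pi]
  ring_nf

lemma pi_sum_le_le_exp (ht : t ≤ 0) (hint : Integrable (fun x => Real.exp (t * L x)) μ) (c : ℝ) :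
    Measure.pi (fun _ : ι => μ) {x | ∑ i, L (x i) ≤ Fintype.card ι * c}
      ≤ ENNReal.ofReal (Real.exp (-(Fintype.card ι * (t * c - cgf L μ t)))) := by
  rw [← ofReal_measureReal]
  refine ENNReal.ofReal_le_ofReal
    ((measure_le_le_exp_cgf _ ht (integrable_exp_mul_sum_pi hint)).trans_eq ?_)
  rw [cgf_sum_pi]
  ring_nf

end ProductMeasures

section LawOfLargeNumbers

variable {X : Type*} [MeasurableSpace X] (μ : Measure X) [IsProbabilityMeasure μ]

lemma map_restrict_fin_infinitePi (n : ℕ) :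
    (Measure.infinitePi fun _ : ℕ => μ).map (fun ω (i : Fin n) => ω i)
      = Measure.pi fun _ : Fin n => μ := by
  rw [← Measure.infinitePi_eq_pi]
  exact Measure.map_infinitePi_infinitePi_of_inj (P := fun _ => μ) Fin.val_injective

variable {μ} {L : X → ℝ}

lemma tendstoInMeasure_average_infinitePi (hL : Measurable L) (hint : Integrable L μ) :
    TendstoInMeasure (Measure.infinitePi fun _ : ℕ => μ)
      (fun (n : ℕ) ω => (∑ i ∈ Finset.range n, L (ω i)) / n) atTop fun _ => ∫ x, L x ∂μ := by
  have preserving (i : ℕ) : MeasurePreserving (Function.eval i)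
      (Measure.infinitePi fun _ : ℕ => μ) μ := measurePreserving_eval_infinitePi _ i
  have ident (i : ℕ) : IdentDistrib (fun ω : ℕ → X => L (ω i)) L
      (Measure.infinitePi fun _ => μ) μ :=
    ⟨(hL.comp (measurable_pi_apply i)).aemeasurable, hL.aemeasurable, by
      nth_rw 2 [← (preserving i).map_eq]
      exact (Measure.map_map hL (measurable_pi_apply i)).symm⟩
  have indep : iIndepFun (fun i (ω : ℕ → X) => L (ω i)) (Measure.infinitePi fun _ => μ) :=
    iIndepFun_infinitePi (X := fun _ => L) fun _ => hL
  have slln := strong_law_ae_real (fun i (ω : ℕ → X) => L (ω i)) ((ident 0).integrable_iff.mpr hint)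
    (fun i j hij => indep.indepFun hij) fun i => (ident i).trans (ident 0).symm
  rw [(ident 0).integral_eq] at slln
  exact tendstoInMeasure_of_tendsto_ae
    (fun n => Measurable.aestronglyMeasurable (by fun_prop)) slln

lemma tendsto_pi_lt_sum_of_integral_lt (hL : Measurable L) (hint : Integrable L μ) {c : ℝ}
    (hc : ∫ x, L x ∂μ < c) :
    Tendsto (fun n : ℕ => Measure.pi (fun _ : Fin n => μ) {x | n * c < ∑ i, L (x i)})
      atTop (nhds 0) := by
  have deviation := tendstoInMeasure_iff_dist.mp (tendstoInMeasure_average_infinitePi hL hint)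
    (c - ∫ x, L x ∂μ) (sub_pos.mpr hc)
  refine tendsto_of_tendsto_of_tendsto_of_le_of_le' tendsto_const_nhds deviation
    (.of_forall fun _ => zero_le) ?_
  filter_upwards [eventually_gt_atTop 0] with n hn
  rw [← map_restrict_fin_infinitePi μ n, Measure.map_apply (by fun_prop)
    (measurableSet_lt (by fun_prop) (by fun_prop))]
  refine measure_mono fun ω (hω : n * c < ∑ i : Fin n, L (ω i)) => ?_
  have average_ge : c ≤ (∑ i ∈ Finset.range n, L (ω i)) / n := by
    rw [le_div_iff₀ (by exact_mod_cast hn), Finset.sum_range]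
    linarith
  exact (sub_le_sub_right average_ge _).trans (le_abs_self _)

end LawOfLargeNumbers

section ChangeOfMeasure

variable {X : Type*} [MeasurableSpace X] {P Q : Measure X}

lemma withDensity_le_mul_add {g : X → ℝ≥0∞} (hg : Measurable g) (c : ℝ≥0∞) {s : Set X}
    (hs : MeasurableSet s) :
    P.withDensity g s ≤ c * P s + P.withDensity g {x | c < g x} := by
  have small_density : P.withDensity g (s \ {x | c < g x}) ≤ c * P s := calc
    _ = ∫⁻ x in s \ {x | c < g x}, g x ∂P :=
        withDensity_apply _ (hs.diff (measurableSet_lt measurable_const hg))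
    _ ≤ ∫⁻ _ in s \ {x | c < g x}, c ∂P :=
        setLIntegral_mono measurable_const fun x hx => not_lt.mp hx.2
    _ = c * P (s \ {x | c < g x}) := setLIntegral_const _ _
    _ ≤ c * P s := by gcongr; exact Set.sdiff_subset
  calc P.withDensity g s
      ≤ P.withDensity g (s \ {x | c < g x} ∪ {x | c < g x}) :=
        measure_mono (Set.subset_sdiff_union _ _)
    _ ≤ _ := (measure_union_le _ _).trans (by gcongr)

variable [IsProbabilityMeasure P]

lemma pi_le_exp_mul_add [IsFiniteMeasure Q] (hQP : Q ≪ P) {ι : Type*} [Fintype ι] (c : ℝ)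
    {B : Set (ι → X)} (hB : MeasurableSet B) :
    Measure.pi (fun _ : ι => Q) B ≤ ENNReal.ofReal (Real.exp c) * Measure.pi (fun _ : ι => P) B
      + Measure.pi (fun _ : ι => Q) {x | c < ∑ i, llr Q P (x i)} := by
  set g : X → ℝ≥0∞ := fun x => ENNReal.ofReal (Q.rnDeriv P x).toReal
  have hg : Measurable g := by fun_prop
  have density : P.withDensity g = Q := by
    refine (withDensity_congr_ae ?_).trans (Measure.withDensity_rnDeriv_eq Q P hQP)
    filter_upwards [Measure.rnDeriv_ne_top Q P] with x hx using ENNReal.ofReal_toReal hx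
  have : SigmaFinite (P.withDensity g) := density ▸ inferInstance
  have pi_density : (Measure.pi fun _ : ι => P).withDensity (fun x => ∏ i, g (x i))
      = Measure.pi fun _ : ι => Q := by
    rw [← pi_withDensity (fun _ => P) fun _ => hg, density]
  -- Only an inequality, since `llr Q P = log 0 = 0` where the density vanishes.
  have prod_le (x : ι → X) : ∏ i, g (x i) ≤ ENNReal.ofReal (Real.exp (∑ i, llr Q P (x i))) := by
    rw [Real.exp_sum, ENNReal.ofReal_prod_of_nonneg fun _ _ => (Real.exp_pos _).le]
    exact Finset.prod_le_prod' fun i _ => ENNReal.ofReal_le_ofReal (Real.le_exp_log _)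
  have key := withDensity_le_mul_add (P := Measure.pi fun _ : ι => P)
    (g := fun x => ∏ i, g (x i)) (by fun_prop) (ENNReal.ofReal (Real.exp c)) hB
  rw [pi_density] at key
  refine key.trans ?_
  gcongr with x
  intro hx
  simpa [Real.exp_pos] using hx.trans_le (prod_le x)

variable [IsProbabilityMeasure Q]

lemma tendsto_pi_zero_of_integral_llr_lt (hQP : Q ≪ P) (hint : Integrable (llr Q P) Q) {c : ℝ}
    (hc : ∫ x, llr Q P x ∂Q < c) {B : ∀ n : ℕ, Set (Fin n → X)} (hB : ∀ n, MeasurableSet (B n))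
    (hlim : (c : EReal) ≤ atTop.liminf fun n => expRate n (Measure.pi (fun _ : Fin n => P) (B n))) :
    Tendsto (fun n : ℕ => Measure.pi (fun _ : Fin n => Q) (B n)) atTop (nhds 0) := by
  obtain ⟨b, hcb, hbc⟩ := exists_between hc
  obtain ⟨a, hda, hab⟩ := exists_between hcb
  have exp_decay : Tendsto (fun n : ℕ => ENNReal.ofReal (Real.exp (-(n * (b - a))))) atTop
      (nhds 0) := by
    have : Tendsto (fun n : ℕ => (n : ℝ) * (b - a)) atTop atTop :=
      tendsto_natCast_atTop_atTop.atTop_mul_const (sub_pos.mpr hab)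
    simpa using ENNReal.tendsto_ofReal (Real.tendsto_exp_neg_atTop_nhds_zero.comp this)
  have bound := exp_decay.add (tendsto_pi_lt_sum_of_integral_lt (measurable_llr Q P) hint hda)
  rw [add_zero] at bound
  refine tendsto_of_tendsto_of_tendsto_of_le_of_le' tendsto_const_nhds bound
    (.of_forall fun _ => zero_le) ?_
  filter_upwards [eventually_le_exp_of_lt_liminf_expRate
    ((EReal.coe_lt_coe_iff.mpr hbc).trans_le hlim)] with n hn
  refine (pi_le_exp_mul_add hQP (n * a) (hB n)).trans ?_
  gcongr
  calc ENNReal.ofReal (Real.exp (n * a)) * Measure.pi (fun _ : Fin n => P) (B n)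
      ≤ ENNReal.ofReal (Real.exp (n * a)) * ENNReal.ofReal (Real.exp (-(n * b))) := by gcongr
    _ = ENNReal.ofReal (Real.exp (-(n * (b - a)))) := by
        rw [← ENNReal.ofReal_mul (Real.exp_pos _).le, ← Real.exp_add]
        ring_nf

end ChangeOfMeasure

section Converse

lemma lt_ofReal_iff_coe_lt {x : ℝ≥0∞} {r : ℝ} : x < ENNReal.ofReal r ↔ (x : EReal) < r := by
  rw [← EReal.coe_ennreal_lt_coe_ennreal_iff, EReal.coe_ennreal_ofReal,
    EReal.coe_strictMono.monotone.map_max, lt_max_iff]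
  exact or_iff_left (EReal.coe_ennreal_nonneg x).not_gt

variable {X : Type*} [MeasurableSpace X] {P Pb Q : Measure X} [IsProbabilityMeasure P]
  [IsProbabilityMeasure Pb] [IsProbabilityMeasure Q] {r E : ℝ}

lemma rAchievable.coe_le_KLdiv (hQ : KLdiv Q P < ENNReal.ofReal r)
    (h : rAchievable (fun n => Measure.pi fun _ : Fin n => P)
      (fun n => Measure.pi fun _ : Fin n => Pb) r E) :
    (E : EReal) ≤ KLdiv Q Pb := by
  obtain ⟨A, hA, hfirst, hsecond⟩ := h
  by_contra! hlt
  rw [lt_ofReal_iff_coe_lt] at hQ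
  obtain ⟨hQP, hint⟩ : Q ≪ P ∧ Integrable (llr Q P) Q :=
    KLdiv_ne_top_iff.mp fun h => by simp [h] at hQ
  obtain ⟨hQPb, hint'⟩ : Q ≪ Pb ∧ Integrable (llr Q Pb) Q :=
    KLdiv_ne_top_iff.mp fun h => by simp [h] at hlt
  rw [coe_KLdiv_of_integrable hQP hint, EReal.coe_lt_coe_iff] at hQ
  rw [coe_KLdiv_of_integrable hQPb hint', EReal.coe_lt_coe_iff] at hlt
  have total := (tendsto_pi_zero_of_integral_llr_lt hQPb hint' hlt hA hsecond).add
    (tendsto_pi_zero_of_integral_llr_lt hQP hint hQ (fun n => (hA n).compl) hfirst)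
  simp only [measure_add_measure_compl (hA _), measure_univ, add_zero] at total
  exact one_ne_zero (tendsto_nhds_unique tendsto_const_nhds total)

end Converse

section Cgf

variable {Ω : Type*} [MeasurableSpace Ω] {μ : Measure Ω} {X : Ω → ℝ}

lemma continuousOn_mgf_Icc (hX : AEMeasurable X μ) {a b : ℝ} (ha : a ∈ integrableExpSet X μ)
    (hb : b ∈ integrableExpSet X μ) : ContinuousOn (mgf X μ) (Set.Icc a b) := by
  refine continuousOn_of_dominated (bound := fun ω => Real.exp (a * X ω) + Real.exp (b * X ω))
    (fun t _ => by fun_prop) (fun t ht => .of_forall fun ω => ?_) (ha.add hb)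
    (.of_forall fun ω => by fun_prop)
  rw [Real.norm_eq_abs, Real.abs_exp]
  rcases le_total 0 (X ω) with hω | hω
  · exact (Real.exp_le_exp.mpr (mul_le_mul_of_nonneg_right ht.2 hω)).trans
      (le_add_of_nonneg_left (Real.exp_pos _).le)
  · exact (Real.exp_le_exp.mpr (mul_le_mul_of_nonpos_right ht.1 hω)).trans
      (le_add_of_nonneg_right (Real.exp_pos _).le)

lemma continuousOn_cgf_Icc [NeZero μ] (hX : AEMeasurable X μ) {a b : ℝ}
    (ha : a ∈ integrableExpSet X μ) (hb : b ∈ integrableExpSet X μ) :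
    ContinuousOn (cgf X μ) (Set.Icc a b) :=
  (continuousOn_mgf_Icc hX ha hb).log fun _ ht =>
    (mgf_pos' (NeZero.ne μ) (convex_integrableExpSet.ordConnected.out ha hb ht)).ne'

end Cgf

section LogLikelihoodRatio

variable {X : Type*} [MeasurableSpace X] {μ ν : Measure X} [SigmaFinite μ] [SigmaFinite ν]

lemma rnDeriv_smul_exp_mul_llr_ae_eq (hνμ : ν ≪ μ) (t : ℝ) :
    (fun x => (μ.rnDeriv ν x).toReal • Real.exp (t * llr μ ν x))
      =ᵐ[ν] fun x => Real.exp ((t + 1) * llr μ ν x) := by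
  filter_upwards [exp_llr_of_ac' μ ν hνμ] with x hx
  rw [← hx, smul_eq_mul, ← Real.exp_add]
  ring_nf

lemma mem_integrableExpSet_llr_iff (hμν : μ ≪ ν) (hνμ : ν ≪ μ) {t : ℝ} :
    t ∈ integrableExpSet (llr μ ν) μ ↔ t + 1 ∈ integrableExpSet (llr μ ν) ν := by
  rw [integrableExpSet, Set.mem_ofPred_eq, ← integrable_rnDeriv_smul_iff hμν]
  exact integrable_congr (rnDeriv_smul_exp_mul_llr_ae_eq hνμ t)

lemma cgf_llr_self_left (hμν : μ ≪ ν) (hνμ : ν ≪ μ) (t : ℝ) :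
    cgf (llr μ ν) μ t = cgf (llr μ ν) ν (t + 1) := by
  rw [cgf, mgf, ← integral_rnDeriv_smul hμν]
  exact congrArg Real.log (integral_congr_ae (rnDeriv_smul_exp_mul_llr_ae_eq hνμ t))

end LogLikelihoodRatio

section Tangents

/-- The value at `u` of the tangent line to the graph of `f` at `s`. For `f` the cumulant generating
function of the log-likelihood ratio, `-tangentLine f s 0` and `-tangentLine f s 1` are the two
divergences of the tilted measure with parameter `s`. -/
noncomputable def tangentLine (f : ℝ → ℝ) (s u : ℝ) : ℝ :=
  f s + (u - s) * deriv f s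

variable {f : ℝ → ℝ} {a b ε : ℝ}

lemma exists_lt_tangentLine_left (hab : a < b) (hc : ContinuousOn f (Set.Icc a b))
    (hd : DifferentiableOn ℝ f (Set.Ioo a b)) (hε : 0 < ε) :
    ∃ s ∈ Set.Ioo a b, f a - ε < tangentLine f s a := by
  have near : {x | x < b ∧ |f x - f a| < ε / 2} ∈ nhdsWithin a (Set.Ioi a) := by
    have right_cont : ContinuousWithinAt f (Set.Ioi a) a :=
      (hc a (Set.left_mem_Icc.mpr hab.le)).mono_of_mem_nhdsWithin (Icc_mem_nhdsGT hab)
    filter_upwards [Ioo_mem_nhdsGT hab,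
      Metric.tendsto_nhds.mp right_cont.tendsto (ε / 2) (half_pos hε)] with x hx hfx
    exact ⟨hx.2, hfx⟩
  obtain ⟨c, hac, hnear⟩ := mem_nhdsGT_iff_exists_Ioc_subset.mp near
  obtain ⟨hcb, hfc⟩ := hnear (Set.right_mem_Ioc.mpr hac)
  -- `deriv f` may be unbounded near `a`, but `(s - a) * deriv f s` is controlled by a chord.
  obtain ⟨s, ⟨has, hsc⟩, hslope⟩ := exists_deriv_eq_slope f hac
    (hc.mono (Set.Icc_subset_Icc_right hcb.le)) (hd.mono (Set.Ioo_subset_Ioo_right hcb.le))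
  refine ⟨s, ⟨has, hsc.trans hcb⟩, ?_⟩
  have hfs : |f s - f a| < ε / 2 := (hnear ⟨has, hsc.le⟩).2
  have drop_lt : (s - a) * deriv f s < ε / 2 := calc
    (s - a) * deriv f s = (s - a) / (c - a) * (f c - f a) := by rw [hslope]; ring
    _ ≤ |(s - a) / (c - a) * (f c - f a)| := le_abs_self _
    _ ≤ |f c - f a| := by
      rw [abs_mul, abs_of_nonneg (div_nonneg (sub_nonneg.mpr has.le) (sub_nonneg.mpr hac.le))]
      exact mul_le_of_le_one_left (abs_nonneg _)
        (div_le_one_of_le₀ (by linarith) (sub_nonneg.mpr hac.le))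
    _ < ε / 2 := hfc
  rw [tangentLine]
  linarith [neg_abs_le (f s - f a)]

lemma exists_lt_tangentLine_right (hab : a < b) (hc : ContinuousOn f (Set.Icc a b))
    (hd : DifferentiableOn ℝ f (Set.Ioo a b)) (hε : 0 < ε) :
    ∃ s ∈ Set.Ioo a b, f b - ε < tangentLine f s b := by
  have maps_Icc : Set.MapsTo Neg.neg (Set.Icc (-b) (-a)) (Set.Icc a b) := fun x hx =>
    ⟨le_neg.mp hx.2, neg_le.mp hx.1⟩
  have maps_Ioo : Set.MapsTo Neg.neg (Set.Ioo (-b) (-a)) (Set.Ioo a b) := fun x hx =>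
    ⟨lt_neg.mp hx.2, neg_lt.mp hx.1⟩
  obtain ⟨s, hs, hlt⟩ := exists_lt_tangentLine_left (f := fun x => f (-x)) (neg_lt_neg hab)
    (hc.comp continuousOn_neg maps_Icc) (hd.comp (differentiableOn_neg _) maps_Ioo) hε
  refine ⟨-s, maps_Ioo hs, ?_⟩
  simp only [tangentLine, deriv_comp_neg, neg_neg] at hlt ⊢
  linarith

end Tangents

section Crossing

lemma exists_eq_mem_closure_lt {α β : Type*} [TopologicalSpace α] [PreconnectedSpace α]
    [TopologicalSpace β] [LinearOrder β] [OrderClosedTopology β] {f : α → β} (hf : Continuous f)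
    {a b : α} {c : β} (ha : f a < c) (hb : c ≤ f b) :
    ∃ t ∈ closure {x | f x < c}, f t = c := by
  obtain ⟨t, ht⟩ : (frontier {x | f x < c}).Nonempty :=
    nonempty_frontier_iff.mpr ⟨⟨a, ha⟩, fun h => (h ▸ Set.mem_univ b : b ∈ {x | f x < c}).not_ge hb⟩
  exact ⟨t, frontier_subset_closure ht, frontier_lt_subset_eq hf continuous_const ht⟩

end Crossing

section HellingerArc

variable {X : Type*} [MeasurableSpace X]

/-- The exponential arc from `P` (at `s = 0`) to `Pb` (at `s = 1`): the probability measure whose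
density is proportional to `p ^ (1 - s) * pb ^ s`, written as a tilting of `P`. -/
noncomputable def hellingerArc (P Pb : Measure X) (s : ℝ) : Measure X :=
  P.tilted fun x => s * llr Pb P x

variable {P Pb : Measure X} {s : ℝ}

lemma hellingerArc_absolutelyContinuous : hellingerArc P Pb s ≪ P :=
  tilted_absolutelyContinuous _ _

lemma isProbabilityMeasure_hellingerArc [NeZero P] (hs : s ∈ integrableExpSet (llr Pb P) P) :
    IsProbabilityMeasure (hellingerArc P Pb s) :=
  isProbabilityMeasure_tilted hs

lemma integrable_llr_hellingerArc (hs : s ∈ interior (integrableExpSet (llr Pb P) P)) :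
    Integrable (llr Pb P) (hellingerArc P Pb s) :=
  memLp_one_iff_integrable.mp (memLp_tilted_mul hs 1)

lemma integral_llr_hellingerArc (hs : s ∈ interior (integrableExpSet (llr Pb P) P)) :
    ∫ x, llr Pb P x ∂hellingerArc P Pb s = deriv (cgf (llr Pb P) P) s :=
  integral_tilted_mul_self hs

variable [IsProbabilityMeasure P]

lemma coe_KLdiv_hellingerArc_left (hs : s ∈ interior (integrableExpSet (llr Pb P) P)) :
    (KLdiv (hellingerArc P Pb s) P : EReal) = (-tangentLine (cgf (llr Pb P) P) s 0 : ℝ) := by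
  have hexp : s ∈ integrableExpSet (llr Pb P) P := interior_subset hs
  have := isProbabilityMeasure_hellingerArc hexp
  have llr_eq : llr (hellingerArc P Pb s) P =ᵐ[hellingerArc P Pb s]
      fun x => s * llr Pb P x + -cgf (llr Pb P) P s :=
    hellingerArc_absolutelyContinuous.ae_le (log_rnDeriv_tilted_left_self hexp)
  rw [coe_KLdiv_of_llr_ae_eq hellingerArc_absolutelyContinuous (integrable_llr_hellingerArc hs)
    llr_eq, integral_llr_hellingerArc hs, tangentLine]
  ring_nf

variable [IsProbabilityMeasure Pb]

lemma coe_KLdiv_hellingerArc_right (hac : P ≪ Pb)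
    (hs : s ∈ interior (integrableExpSet (llr Pb P) P)) :
    (KLdiv (hellingerArc P Pb s) Pb : EReal) = (-tangentLine (cgf (llr Pb P) P) s 1 : ℝ) := by
  have hexp : s ∈ integrableExpSet (llr Pb P) P := interior_subset hs
  have := isProbabilityMeasure_hellingerArc hexp
  have llr_eq : llr (hellingerArc P Pb s) Pb =ᵐ[hellingerArc P Pb s]
      fun x => (s - 1) * llr Pb P x + -cgf (llr Pb P) P s := by
    refine hellingerArc_absolutelyContinuous.ae_le ?_
    filter_upwards [llr_tilted_left hac hexp (by fun_prop), neg_llr hac]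
      with x htilted hneg
    rw [hellingerArc, htilted, ← hneg, Pi.neg_apply, cgf, mgf]
    ring
  rw [coe_KLdiv_of_llr_ae_eq (hellingerArc_absolutelyContinuous.trans hac)
    (integrable_llr_hellingerArc hs) llr_eq, integral_llr_hellingerArc hs, tangentLine]
  ring_nf

lemma Icc_subset_integrableExpSet_llr (hac : P ≪ Pb) (hac' : Pb ≪ P) :
    Set.Icc 0 1 ⊆ integrableExpSet (llr Pb P) P := by
  have zero_mem : (0 : ℝ) ∈ integrableExpSet (llr Pb P) P := by simp [integrableExpSet]
  have one_mem : (0 : ℝ) + 1 ∈ integrableExpSet (llr Pb P) P :=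
    (mem_integrableExpSet_llr_iff hac' hac).mp (by simp [integrableExpSet])
  exact convex_integrableExpSet.ordConnected.out zero_mem (by simpa using one_mem)

lemma Ioo_subset_interior_integrableExpSet_llr (hac : P ≪ Pb) (hac' : Pb ≪ P) :
    Set.Ioo 0 1 ⊆ interior (integrableExpSet (llr Pb P) P) :=
  interior_maximal (Set.Ioo_subset_Icc_self.trans (Icc_subset_integrableExpSet_llr hac hac'))
    isOpen_Ioo

lemma cgf_llr_one (hac : P ≪ Pb) (hac' : Pb ≪ P) : cgf (llr Pb P) P 1 = 0 := by
  simpa using (cgf_llr_self_left hac' hac 0).symm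

lemma rAchievable_tangentLine (hac : P ≪ Pb) (hac' : Pb ≪ P) (hs : s ∈ Set.Ioo (0 : ℝ) 1) :
    rAchievable (fun n => Measure.pi fun _ : Fin n => P) (fun n => Measure.pi fun _ : Fin n => Pb)
      (-tangentLine (cgf (llr Pb P) P) s 0) (-tangentLine (cgf (llr Pb P) P) s 1) := by
  have hsP : s ∈ integrableExpSet (llr Pb P) P :=
    Icc_subset_integrableExpSet_llr hac hac' (Set.Ioo_subset_Icc_self hs)
  have hsPb : s - 1 ∈ integrableExpSet (llr Pb P) Pb :=
    (mem_integrableExpSet_llr_iff hac' hac).mpr (by simpa using hsP)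
  set m := deriv (cgf (llr Pb P) P) s
  refine rAchievable_of_le_exp (A := fun n => {x | ∑ i, llr Pb P (x i) ≤ n * m})
    (fun n => measurableSet_le (by fun_prop) measurable_const) (fun n => ?_) fun n => ?_
  · have tail := pi_le_sum_le_exp (ι := Fin n) hs.1.le hsP m
    rw [Fintype.card_fin] at tail
    have exponent : -tangentLine (cgf (llr Pb P) P) s 0 = s * m - cgf (llr Pb P) P s := by
      rw [tangentLine]; ring
    rw [exponent]
    refine le_trans (measure_mono fun x (hx : ¬∑ i, llr Pb P (x i) ≤ n * m) => ?_) tail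
    exact (not_le.mp hx).le
  · have tail := pi_sum_le_le_exp (ι := Fin n) (sub_nonpos.mpr hs.2.le) hsPb m
    rw [Fintype.card_fin, cgf_llr_self_left hac' hac, sub_add_cancel] at tail
    have exponent : -tangentLine (cgf (llr Pb P) P) s 1 = (s - 1) * m - cgf (llr Pb P) P s := by
      rw [tangentLine]; ring
    rwa [exponent]

end HellingerArc

section HoeffdingExponent

variable {X : Type*} [MeasurableSpace X]

/-- The right-hand side of Hoeffding's formula, `inf {D(Q‖Pb) : D(Q‖P) < r}`. -/
noncomputable def hoeffdingExponent (P Pb : Measure X) (r : ℝ) : EReal :=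
  sInf {x : EReal | ∃ Q : Measure X, IsProbabilityMeasure Q ∧
    KLdiv Q P < ENNReal.ofReal r ∧ x = ((KLdiv Q Pb : ℝ≥0∞) : EReal)}

variable {P Pb : Measure X} [IsProbabilityMeasure P] [IsProbabilityMeasure Pb] {r s : ℝ}

lemma Be_le_hoeffdingExponent :
    Be (fun n => Measure.pi fun _ : Fin n => P) (fun n => Measure.pi fun _ : Fin n => Pb) r
      ≤ hoeffdingExponent P Pb r := by
  refine sSup_le ?_
  rintro _ ⟨E, hE, rfl⟩
  refine le_sInf ?_
  rintro _ ⟨Q, hQ, hQr, rfl⟩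
  exact hE.coe_le_KLdiv hQr

lemma hoeffdingExponent_le_neg_tangentLine (hac : P ≪ Pb) (hac' : Pb ≪ P)
    (hs : s ∈ Set.Ioo (0 : ℝ) 1) (hr : -tangentLine (cgf (llr Pb P) P) s 0 < r) :
    hoeffdingExponent P Pb r ≤ (-tangentLine (cgf (llr Pb P) P) s 1 : ℝ) := by
  have hs' := Ioo_subset_interior_integrableExpSet_llr hac hac' hs
  refine sInf_le ⟨hellingerArc P Pb s, isProbabilityMeasure_hellingerArc (interior_subset hs'), ?_,
    (coe_KLdiv_hellingerArc_right hac hs').symm⟩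
  rw [lt_ofReal_iff_coe_lt, coe_KLdiv_hellingerArc_left hs']
  exact_mod_cast hr

lemma analyticOnNhd_cgf_llr (hac : P ≪ Pb) (hac' : Pb ≪ P) :
    AnalyticOnNhd ℝ (cgf (llr Pb P) P) (Set.Ioo 0 1) :=
  analyticOnNhd_cgf.mono (Ioo_subset_interior_integrableExpSet_llr hac hac')

lemma continuousOn_cgf_llr (hac : P ≪ Pb) (hac' : Pb ≪ P) :
    ContinuousOn (cgf (llr Pb P) P) (Set.Icc 0 1) :=
  continuousOn_cgf_Icc (by fun_prop) (Icc_subset_integrableExpSet_llr hac hac' (by simp))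
    (Icc_subset_integrableExpSet_llr hac hac' (by simp))

lemma continuousOn_tangentLine_cgf_llr (hac : P ≪ Pb) (hac' : Pb ≪ P) (u : ℝ) :
    ContinuousOn (fun s => tangentLine (cgf (llr Pb P) P) s u) (Set.Ioo 0 1) :=
  (analyticOnNhd_cgf_llr hac hac').continuousOn.add ((continuousOn_const.sub continuousOn_id).mul
    (analyticOnNhd_cgf_llr hac hac').deriv.continuousOn)

lemma exists_neg_tangentLine_cgf_llr_zero_lt (hac : P ≪ Pb) (hac' : Pb ≪ P) {ε : ℝ}
    (hε : 0 < ε) : ∃ s ∈ Set.Ioo (0 : ℝ) 1, -tangentLine (cgf (llr Pb P) P) s 0 < ε := by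
  obtain ⟨s, hs, hlt⟩ := exists_lt_tangentLine_left zero_lt_one (continuousOn_cgf_llr hac hac')
    (analyticOnNhd_cgf_llr hac hac').differentiableOn hε
  rw [cgf_zero] at hlt
  exact ⟨s, hs, by linarith⟩

lemma exists_neg_tangentLine_cgf_llr_one_lt (hac : P ≪ Pb) (hac' : Pb ≪ P) {ε : ℝ}
    (hε : 0 < ε) : ∃ s ∈ Set.Ioo (0 : ℝ) 1, -tangentLine (cgf (llr Pb P) P) s 1 < ε := by
  obtain ⟨s, hs, hlt⟩ := exists_lt_tangentLine_right zero_lt_one (continuousOn_cgf_llr hac hac')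
    (analyticOnNhd_cgf_llr hac hac').differentiableOn hε
  rw [cgf_llr_one hac hac'] at hlt
  exact ⟨s, hs, by linarith⟩

lemma hoeffdingExponent_le_Be (hac : P ≪ Pb) (hac' : Pb ≪ P) (hr : 0 < r) :
    hoeffdingExponent P Pb r ≤ Be (fun n => Measure.pi fun _ : Fin n => P)
      (fun n => Measure.pi fun _ : Fin n => Pb) r := by
  have : PreconnectedSpace (Set.Ioo (0 : ℝ) 1) := Subtype.preconnectedSpace isPreconnected_Ioo
  let D (s : Set.Ioo (0 : ℝ) 1) (u : ℝ) : ℝ := -tangentLine (cgf (llr Pb P) P) s u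
  have hcont (u : ℝ) : Continuous fun s => D s u :=
    (continuousOn_tangentLine_cgf_llr hac hac' u).neg.domRestrict
  by_cases hall : ∀ s, D s 0 < r
  · have nonpos : hoeffdingExponent P Pb r ≤ 0 := by
      refine EReal.le_of_forall_lt_iff_le.mp fun z hz => ?_
      obtain ⟨s, hs, hlt⟩ := exists_neg_tangentLine_cgf_llr_one_lt hac hac' (EReal.coe_pos.mp hz)
      exact (hoeffdingExponent_le_neg_tangentLine hac hac' hs (hall ⟨s, hs⟩)).trans
        (EReal.coe_le_coe_iff.mpr hlt.le)
    exact nonpos.trans Be_nonneg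
  · push Not at hall
    obtain ⟨b, hb⟩ := hall
    obtain ⟨a, ha, har⟩ := exists_neg_tangentLine_cgf_llr_zero_lt hac hac' hr
    obtain ⟨t, ht, rfl⟩ := exists_eq_mem_closure_lt (hcont 0) (a := ⟨a, ha⟩) har hb
    have le_D : hoeffdingExponent P Pb (D t 0) ≤ (D t 1 : ℝ) :=
      closure_minimal (fun s hs => hoeffdingExponent_le_neg_tangentLine hac hac' s.2 hs)
        (isClosed_le continuous_const (continuous_coe_real_ereal.comp (hcont 1))) ht
    exact le_D.trans (rAchievable_tangentLine hac hac' t.2).coe_le_Be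

end HoeffdingExponent

theorem hoeffding_error_exponent_abstract_general {X : Type*} [MeasurableSpace X]
    (P Pb : Measure X) [IsProbabilityMeasure P] [IsProbabilityMeasure Pb]
    (hac : P ≪ Pb) (hac' : Pb ≪ P) (r : ℝ) (hr : 0 < r) :
    Be (fun n => Measure.pi fun _ : Fin n => P)
       (fun n => Measure.pi fun _ : Fin n => Pb) r
      = sInf {x : EReal | ∃ Q : Measure X, IsProbabilityMeasure Q ∧
          KLdiv Q P < ENNReal.ofReal r ∧ x = ((KLdiv Q Pb : ℝ≥0∞) : EReal)} :=
  le_antisymm Be_le_hoeffdingExponent (hoeffdingExponent_le_Be hac hac' hr)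

/-- Abstract-alphabet Hoeffding theorem (eq. (3.39)): for mutually absolutely continuous
`P, P̄` with `D(P‖P̄) < ∞` and `D(P̄‖P) < ∞`, the i.i.d. hypothesis testing problem
`P^{⊗n}` vs `P̄^{⊗n}` satisfies `B_e(r) = inf { D(Q‖P̄) : D(Q‖P) < r }` for `r > 0`. -/
theorem hoeffding_error_exponent_abstract {X : Type*} [MeasurableSpace X]
    (P Pb : Measure X) [IsProbabilityMeasure P] [IsProbabilityMeasure Pb]
    (hac : P ≪ Pb) (hac' : Pb ≪ P)
    (hfin : KLdiv P Pb ≠ ⊤) (hfin' : KLdiv Pb P ≠ ⊤) (r : ℝ) (hr : 0 < r) :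
    Be (fun n => Measure.pi fun _ : Fin n => P)
       (fun n => Measure.pi fun _ : Fin n => Pb) r
      = sInf {x : EReal | ∃ Q : Measure X, IsProbabilityMeasure Q ∧
          KLdiv Q P < ENNReal.ofReal r ∧ x = ((KLdiv Q Pb : ℝ≥0∞) : EReal)} :=
  hoeffding_error_exponent_abstract_general P Pb hac hac' r hr
end
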